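/- arXiv:2002.01076 — 2 statements merged into one kernel-verified Lean document; each statement's English description precedes it below -/
import Mathlib

section
/- There exists an absolute constant C > 0 such that for any irrational α, any k ≥ 1, and any real c with 1 ≤ c ≤ q_k, we have ∑_{q_k ≤ |q| < q_{k+1}} (1/q²)·min{1/‖qα‖², c²} ≤ C·c/q_k, where q_k, q_{k+1} are denominators of consecutive convergents of α. -/
/-- Distance from a real number to the nearest integer. -/
noncomputable def nint (x : ℝ) : ℝ := |x - round x|

open Finset

/-- The numerators of the convergents of a real number are integers. -/
theorem exists_int_eq_nums_of (α : ℝ) (n : ℕ) : ∃ z : ℤ, (GenContFract.of α).nums n = z := by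
  suffices h : (∃ z : ℤ, (GenContFract.of α).nums n = z) ∧
      ∃ z : ℤ, (GenContFract.of α).nums (n + 1) = z from h.1
  induction n with
  | zero =>
    have h0 : (GenContFract.of α).nums 0 = (⌊α⌋ : ℤ) := by
      rw [GenContFract.zeroth_num_eq_h, GenContFract.of_h_eq_floor]
    refine ⟨⟨_, h0⟩, ?_⟩
    rcases hs : (GenContFract.of α).s.get? 0 with _ | gp
    · exact ⟨⌊α⌋, (GenContFract.nums_stable_of_terminated (Nat.zero_le 1) hs).trans h0⟩
    · obtain ⟨ha, z, hz⟩ := GenContFract.of_partNum_eq_one_and_exists_int_partDen_eq hs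
      refine ⟨z * ⌊α⌋ + 1, ?_⟩
      rw [GenContFract.first_num_eq hs, ha, hz, GenContFract.of_h_eq_floor]
      push_cast
      ring
  | succ n ih =>
    obtain ⟨⟨x, hx⟩, y, hy⟩ := ih
    refine ⟨⟨y, hy⟩, ?_⟩
    rcases hs : (GenContFract.of α).s.get? (n + 1) with _ | gp
    · exact ⟨y, (GenContFract.nums_stable_of_terminated (Nat.le_succ (n + 1)) hs).trans hy⟩
    · obtain ⟨ha, z, hz⟩ := GenContFract.of_partNum_eq_one_and_exists_int_partDen_eq hs
      refine ⟨z * y + x, ?_⟩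
      rw [GenContFract.nums_recurrence hs hx hy, ha, hz]
      push_cast
      ring

/-- The continued fraction of an irrational number does not terminate. -/
theorem Irrational.not_terminatedAt_of {α : ℝ} (hα : Irrational α) (n : ℕ) :
    ¬(GenContFract.of α).TerminatedAt n := by
  intro h
  obtain ⟨r, hr⟩ := (GenContFract.terminates_iff_rat α).1 ⟨n, h⟩
  exact hα ⟨r, hr.symm⟩

/-- The `k`-th convergent of an irrational number is a reduced fraction with quadratically
small error. -/
theorem exists_isCoprime_abs_sub_div_le {α : ℝ} (hα : Irrational α) {q : ℕ → ℕ}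
    (hq : ∀ n, (q n : ℝ) = (GenContFract.of α).dens n) (k : ℕ) (hk : 0 < q k) :
    ∃ p : ℤ, IsCoprime p (q k : ℤ) ∧ |α - p / q k| ≤ 1 / (q k : ℝ) ^ 2 := by
  obtain ⟨p, hp⟩ := exists_int_eq_nums_of α k
  obtain ⟨p', hp'⟩ := exists_int_eq_nums_of α (k + 1)
  have hk' : (0 : ℝ) < q k := by exact_mod_cast hk
  refine ⟨p, ?_, ?_⟩
  · have hdet : (GenContFract.of α).nums k * (GenContFract.of α).dens (k + 1) -
        (GenContFract.of α).dens k * (GenContFract.of α).nums (k + 1) = (-1) ^ (k + 1) :=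
      SimpContFract.determinant (s := SimpContFract.of α) (hα.not_terminatedAt_of k)
    rw [hp, hp', ← hq, ← hq] at hdet
    have hdet' : p * (q (k + 1) : ℤ) - q k * p' = (-1) ^ (k + 1) := by exact_mod_cast hdet
    refine ⟨(-1) ^ (k + 1) * q (k + 1), -((-1) ^ (k + 1) * p'), ?_⟩
    have hsq : ((-1 : ℤ) ^ (k + 1)) * (-1) ^ (k + 1) = 1 := by
      rw [← mul_pow]; simp
    linear_combination (-1 : ℤ) ^ (k + 1) * hdet' + hsq
  · have h := GenContFract.abs_sub_convs_le (hα.not_terminatedAt_of k)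
    have hmono : (q k : ℝ) ≤ q (k + 1) := by
      rw [hq, hq]; exact GenContFract.of_den_mono
    have hconv : (GenContFract.of α).convs k = p / q k := by
      rw [GenContFract.conv_eq_num_div_den, hp, ← hq]
    rw [hconv, ← hq, ← hq] at h
    refine h.trans ?_
    rw [sq]
    gcongr

/-- If `p / Q` is reduced and within `1 / Q²` of `α`, then `dα` is at distance at least
`1 / (2Q)` from the integers whenever `0 < |d| ≤ Q / 2`. -/
theorem one_div_two_mul_le_abs_mul_sub {α : ℝ} {Q : ℕ} (hQ : 0 < Q) {p : ℤ}
    (hcop : IsCoprime p (Q : ℤ)) (happ : |α - p / Q| ≤ 1 / (Q : ℝ) ^ 2) {d : ℤ} (hd : d ≠ 0)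
    (hdQ : 2 * |d| ≤ Q) (n : ℤ) : 1 / (2 * (Q : ℝ)) ≤ |d * α - n| := by
  have hQ' : (0 : ℝ) < Q := by exact_mod_cast hQ
  have hne : d * p - n * Q ≠ 0 := by
    intro h
    have hdvd : (Q : ℤ) ∣ d * p := ⟨n, by linarith⟩
    have := Int.le_of_dvd (abs_pos.2 hd) ((dvd_abs _ _).2 (hcop.symm.dvd_of_dvd_mul_right hdvd))
    have := abs_pos.2 hd
    omega
  have h1 : (1 : ℝ) ≤ |(d : ℝ) * p - n * Q| := by
    exact_mod_cast Int.one_le_abs hne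
  have hdQ' : 2 * |(d : ℝ)| ≤ Q := by exact_mod_cast hdQ
  have h2 : |(d : ℝ)| * |α - p / Q| * Q ≤ 1 / 2 := by
    calc |(d : ℝ)| * |α - p / Q| * Q ≤ (Q / 2) * (1 / (Q : ℝ) ^ 2) * Q := by
          gcongr
          linarith
      _ = 1 / 2 := by field_simp
  have h3 : (d : ℝ) * p - n * Q = (d * α - n) * Q - d * (α - p / Q) * Q := by
    field_simp
    ring
  have h4 : |(d : ℝ) * p - n * Q| ≤ |d * α - n| * Q + |(d : ℝ)| * |α - p / Q| * Q := by
    rw [h3]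
    refine (abs_sub _ _).trans ?_
    rw [abs_mul, abs_mul, abs_mul, abs_of_pos hQ']
  rw [div_le_iff₀ (by positivity)]
  linarith

theorem sum_range_one_div_sq_add_sq_le {N : ℝ} (hN : 1 ≤ N) (m : ℕ) :
    ∑ v ∈ range m, 1 / (N ^ 2 + (v : ℝ) ^ 2) ≤ 4 / N := by
  have key : ∑ v ∈ range m, 1 / (N ^ 2 + (v : ℝ) ^ 2) ≤
      2 * (1 / (N - 1 / 2) - 1 / (N + m - 1 / 2)) := by
    induction m with
    | zero => simp
    | succ m ih =>
      rw [sum_range_succ]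
      have hm : (0 : ℝ) ≤ m := m.cast_nonneg
      have hstep : 1 / (N ^ 2 + (m : ℝ) ^ 2) ≤
          2 * (1 / (N + m - 1 / 2) - 1 / (N + (m + 1 : ℕ) - 1 / 2)) := by
        have ha : 0 < N + m - 1 / 2 := by linarith
        have hb : 0 < N + ((m + 1 : ℕ) : ℝ) - 1 / 2 := by push_cast; linarith
        rw [div_sub_div _ _ ha.ne' hb.ne', mul_div_assoc', div_le_div_iff₀ (by positivity)
          (by positivity)]
        push_cast
        nlinarith [sq_nonneg (N - m)]
      linarith
  have hm : (0 : ℝ) ≤ m := m.cast_nonneg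
  have h1 : 0 ≤ 1 / (N + m - 1 / 2) := by
    apply one_div_nonneg.2; linarith
  have h2 : 1 / (N - 1 / 2) ≤ 2 / N := by
    rw [div_le_div_iff₀ (by linarith) (by linarith)]; linarith
  calc _ ≤ _ := key
    _ ≤ 2 * (2 / N) := by linarith
    _ = 4 / N := by ring

/-- Finite partial sums of `∑_{v ∈ ℤ} 1 / (N² + v²)` are at most `8 / N`. -/
theorem sum_one_div_sq_add_sq_le {N : ℝ} (hN : 1 ≤ N) (S : Finset ℤ) :
    ∑ v ∈ S, 1 / (N ^ 2 + (v : ℝ) ^ 2) ≤ 8 / N := by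
  have half : ∀ T : Finset ℤ, Set.InjOn Int.natAbs T →
      ∑ v ∈ T, 1 / (N ^ 2 + (v : ℝ) ^ 2) ≤ 4 / N := by
    intro T hT
    have heq : ∑ v ∈ T, 1 / (N ^ 2 + (v : ℝ) ^ 2) =
        ∑ w ∈ T.image Int.natAbs, 1 / (N ^ 2 + (w : ℝ) ^ 2) := by
      rw [sum_image hT]
      refine sum_congr rfl fun v _ => ?_
      rw [Nat.cast_natAbs, Int.cast_abs, sq_abs]
    rw [heq]
    refine le_trans ?_ (sum_range_one_div_sq_add_sq_le hN ((T.image Int.natAbs).sup id + 1))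
    refine sum_le_sum_of_subset_of_nonneg (fun w hw => ?_) fun _ _ _ => by positivity
    exact mem_range.2 (Nat.lt_succ_of_le (le_sup (f := id) hw))
  rw [← sum_filter_add_sum_filter_not S (fun v => 0 ≤ v)]
  have h1 := half (S.filter (fun v => 0 ≤ v)) (by
    intro a ha b hb hab
    simp only [coe_filter, Set.mem_ofPred_eq] at ha hb
    omega)
  have h2 := half (S.filter (fun v => ¬0 ≤ v)) (by
    intro a ha b hb hab
    simp only [coe_filter, Set.mem_ofPred_eq] at ha hb
    omega)
  calc _ ≤ 4 / N + 4 / N := add_le_add h1 h2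
    _ = 8 / N := by ring

theorem min_one_div_sq_le {Q c y : ℝ} (hc : 1 ≤ c) (hcQ : c ≤ Q) :
    min (1 / y ^ 2) (c ^ 2) ≤
      11 * Q ^ 2 * (1 / ((Q / c) ^ 2 + ((⌊2 * Q * y⌋ : ℤ) : ℝ) ^ 2)) := by
  set v : ℝ := ((⌊2 * Q * y⌋ : ℤ) : ℝ)
  set m := min (1 / y ^ 2) (c ^ 2)
  have hc0 : 0 < c := by linarith
  have hQ0 : 0 < Q := by linarith
  have hN : 1 ≤ (Q / c) ^ 2 := one_le_pow₀ ((one_le_div hc0).2 hcQ)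
  have hm0 : 0 ≤ m := le_min (by positivity) (by positivity)
  have hmy : m * y ^ 2 ≤ 1 :=
    (mul_le_mul_of_nonneg_right (min_le_left _ _) (sq_nonneg y)).trans
      (by rw [one_div]; exact inv_mul_le_one)
  have hmN : m * (Q / c) ^ 2 ≤ Q ^ 2 :=
    calc m * (Q / c) ^ 2 ≤ c ^ 2 * (Q / c) ^ 2 := by gcongr; exact min_le_right _ _
      _ = Q ^ 2 := by field_simp
  have hv1 : v ≤ 2 * Q * y := Int.floor_le _
  have hv2 : 2 * Q * y < v + 1 := Int.lt_floor_add_one _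
  have hvsq : v ^ 2 ≤ 8 * Q ^ 2 * y ^ 2 + 2 := by
    nlinarith [sq_nonneg (2 * Q * y + (2 * Q * y - v))]
  rw [mul_one_div, le_div_iff₀ (by positivity)]
  calc m * ((Q / c) ^ 2 + v ^ 2) ≤ m * ((Q / c) ^ 2 + (8 * Q ^ 2 * y ^ 2 + 2 * (Q / c) ^ 2)) := by
        gcongr; linarith
    _ = 3 * (m * (Q / c) ^ 2) + 8 * Q ^ 2 * (m * y ^ 2) := by ring
    _ ≤ 3 * Q ^ 2 + 8 * Q ^ 2 * 1 := by gcongr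
    _ = 11 * Q ^ 2 := by ring

/-- The sum of `min(1/‖iα‖², c²)` over a set of integers of diameter at most `Q / 2` is
`O(cQ)` if the multiples `dα` with `0 < |d| ≤ Q / 2` are `1 / (2Q)`-far from the integers. -/
theorem sum_min_le_of_separated {α : ℝ} {Q : ℕ}
    (hsep : ∀ d : ℤ, d ≠ 0 → 2 * |d| ≤ Q → ∀ n : ℤ, 1 / (2 * (Q : ℝ)) ≤ |d * α - n|)
    {c : ℝ} (hc : 1 ≤ c) (hcQ : c ≤ Q) (B : Finset ℤ)
    (hB : ∀ i ∈ B, ∀ j ∈ B, 2 * |i - j| ≤ Q) :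
    ∑ i ∈ B, min (1 / nint ((i : ℝ) * α) ^ 2) (c ^ 2) ≤ 88 * (Q : ℝ) * c := by
  have hQ0 : (0 : ℝ) < Q := by linarith
  have hc0 : 0 < c := by linarith
  set f : ℤ → ℤ := fun i => ⌊2 * (Q : ℝ) * ((i : ℝ) * α - round ((i : ℝ) * α))⌋
  have hinj : Set.InjOn f B := by
    intro i hi j hj hij
    by_contra hne
    have h1 := hsep (i - j) (sub_ne_zero.2 hne) (hB i hi j hj)
      (round ((i : ℝ) * α) - round ((j : ℝ) * α))
    have h2 := Int.abs_sub_lt_one_of_floor_eq_floor hij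
    rw [← mul_sub, abs_mul, abs_of_pos (by positivity : (0 : ℝ) < 2 * Q)] at h2
    rw [div_le_iff₀' (by positivity)] at h1
    have h3 : (((i - j : ℤ) : ℝ) * α - ((round ((i : ℝ) * α) - round ((j : ℝ) * α) : ℤ) : ℝ)) =
        (i : ℝ) * α - round ((i : ℝ) * α) - ((j : ℝ) * α - round ((j : ℝ) * α)) := by
      push_cast; ring
    rw [h3] at h1
    linarith
  calc ∑ i ∈ B, min (1 / nint ((i : ℝ) * α) ^ 2) (c ^ 2)
      ≤ ∑ i ∈ B, 11 * (Q : ℝ) ^ 2 * (1 / (((Q : ℝ) / c) ^ 2 + (f i : ℝ) ^ 2)) := by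
        refine sum_le_sum fun i _ => ?_
        rw [nint, sq_abs]
        exact min_one_div_sq_le hc hcQ
    _ = 11 * (Q : ℝ) ^ 2 * ∑ v ∈ B.image f, 1 / (((Q : ℝ) / c) ^ 2 + (v : ℝ) ^ 2) := by
        rw [sum_image hinj, mul_sum]
    _ ≤ 11 * (Q : ℝ) ^ 2 * (8 / ((Q : ℝ) / c)) := by
        gcongr
        exact sum_one_div_sq_add_sq_le ((one_le_div hc0).2 hcQ) _
    _ = 88 * (Q : ℝ) * c := by field_simp; norm_num

theorem one_div_sq_le_of_block {Q : ℕ} (hQ : 0 < Q) {i : ℤ} (hi : (Q : ℤ) ≤ |i|) :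
    1 / (i : ℝ) ^ 2 ≤
      10 / (Q : ℝ) ^ 2 * (1 / ((1 : ℝ) ^ 2 + ((i / (Q / 2 + 1 : ℕ) : ℤ) : ℝ) ^ 2)) := by
  set L : ℕ := Q / 2 + 1 with hL
  set b : ℤ := i / (L : ℤ) with hb
  have hQ0 : (0 : ℝ) < Q := by exact_mod_cast hQ
  have hL0 : (0 : ℤ) < L := by omega
  have hQL : (Q : ℤ) ≤ 2 * L := by omega
  have hmod := Int.emod_add_mul_ediv i L
  have hm0 := Int.emod_nonneg i hL0.ne'
  have hm1 := Int.emod_lt_of_pos i hL0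
  rw [← hb] at hmod
  have hbL : |b| * L ≤ |i| + L := by
    have : |b| * L = |(L : ℤ) * b| := by
      rw [abs_mul, abs_of_pos hL0, mul_comm]
    rw [this]
    have : (L : ℤ) * b = i - i % L := by linarith
    rw [this]
    refine (abs_sub _ _).trans ?_
    rw [abs_of_nonneg hm0]
    linarith
  have hbQ : |b| * Q ≤ 3 * |i| := by
    rcases le_or_gt |b| 1 with h | h
    · nlinarith
    · have : (|b| - 1) * (Q : ℤ) ≤ (|b| - 1) * (2 * L) :=
        mul_le_mul_of_nonneg_left hQL (by linarith)
      linarith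
  have hbQ' : |(b : ℝ)| * Q ≤ 3 * |(i : ℝ)| := by exact_mod_cast hbQ
  have hi' : (Q : ℝ) ≤ |(i : ℝ)| := by exact_mod_cast hi
  have hs1 : (b : ℝ) ^ 2 * (Q : ℝ) ^ 2 ≤ 9 * (i : ℝ) ^ 2 := by
    have := pow_le_pow_left₀ (by positivity) hbQ' 2
    rw [mul_pow, mul_pow, sq_abs, sq_abs] at this
    linarith
  have hs2 : (Q : ℝ) ^ 2 ≤ (i : ℝ) ^ 2 := by
    have := pow_le_pow_left₀ hQ0.le hi' 2
    rwa [sq_abs] at this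
  have hi2 : 0 < (i : ℝ) ^ 2 := lt_of_lt_of_le (by positivity) hs2
  rw [div_mul_div_comm, div_le_div_iff₀ hi2 (by positivity)]
  linarith

/-- there is an absolute constant `C > 0` such that for every irrational `α`
with convergent denominators `q`, every `k ≥ 1` and every real `1 ≤ c ≤ q_k`,
`∑_{q_k ≤ |q| < q_{k+1}} (1/q²)·min(1/‖qα‖², c²) ≤ C·c/q_k`. -/
theorem sum_slice_min_upper_bound :
    ∃ C : ℝ, 0 < C ∧ ∀ (α : ℝ), Irrational α →
      ∀ (q : ℕ → ℕ), (∀ n, (q n : ℝ) = (GenContFract.of α).dens n) →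
      ∀ k : ℕ, 1 ≤ k → ∀ c : ℝ, 1 ≤ c → c ≤ (q k : ℝ) →
      ∑ i ∈ (Finset.Ioo (-(q (k+1) : ℤ)) (q (k+1) : ℤ)).filter (fun i => (q k : ℤ) ≤ |i|),
          (1 / (i : ℝ) ^ 2) * min (1 / nint ((i : ℝ) * α) ^ 2) (c ^ 2)
        ≤ C * c / (q k : ℝ) := by
  refine ⟨7040, by norm_num, fun α hα q hq k _ c hc hcq => ?_⟩
  have hQ' : (0 : ℝ) < q k := by linarith
  have hQ : 0 < q k := by exact_mod_cast hQ'
  obtain ⟨p, hcop, happ⟩ := exists_isCoprime_abs_sub_div_le hα hq k hQ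
  have hsep : ∀ d : ℤ, d ≠ 0 → 2 * |d| ≤ q k → ∀ n : ℤ, 1 / (2 * (q k : ℝ)) ≤ |d * α - n| :=
    fun d hd hdQ n => one_div_two_mul_le_abs_mul_sub hQ hcop happ hd hdQ n
  set S := (Finset.Ioo (-(q (k+1) : ℤ)) (q (k+1) : ℤ)).filter (fun i => (q k : ℤ) ≤ |i|)
  set block : ℤ → ℤ := fun i => i / ((q k / 2 + 1 : ℕ) : ℤ)
  have hdiam : ∀ b : ℤ, ∀ i ∈ S.filter (fun i => block i = b),
      ∀ j ∈ S.filter (fun i => block i = b), 2 * |i - j| ≤ q k := by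
    intro b i hi j hj
    have hL0 : (0 : ℤ) < ((q k / 2 + 1 : ℕ) : ℤ) := by omega
    have hib : i / ((q k / 2 + 1 : ℕ) : ℤ) = b := (mem_filter.1 hi).2
    have hjb : j / ((q k / 2 + 1 : ℕ) : ℤ) = b := (mem_filter.1 hj).2
    have hi1 := Int.emod_add_mul_ediv i ((q k / 2 + 1 : ℕ) : ℤ)
    have hj1 := Int.emod_add_mul_ediv j ((q k / 2 + 1 : ℕ) : ℤ)
    rw [hib] at hi1
    rw [hjb] at hj1
    have hi2 := Int.emod_nonneg i hL0.ne'
    have hj2 := Int.emod_nonneg j hL0.ne'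
    have hi3 := Int.emod_lt_of_pos i hL0
    have hj3 := Int.emod_lt_of_pos j hL0
    have habs : |i - j| < ((q k / 2 + 1 : ℕ) : ℤ) := abs_lt.2 ⟨by linarith, by linarith⟩
    omega
  rw [← sum_fiberwise_of_maps_to (fun i hi => mem_image_of_mem block hi)]
  calc ∑ b ∈ S.image block, ∑ i ∈ S.filter (fun i => block i = b),
        (1 / (i : ℝ) ^ 2) * min (1 / nint ((i : ℝ) * α) ^ 2) (c ^ 2)
      ≤ ∑ b ∈ S.image block, 10 / (q k : ℝ) ^ 2 * (1 / ((1 : ℝ) ^ 2 + (b : ℝ) ^ 2)) *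
          (88 * (q k : ℝ) * c) := by
        refine sum_le_sum fun b _ => ?_
        refine le_trans ?_ (mul_le_mul_of_nonneg_left
          (sum_min_le_of_separated hsep hc hcq _ (hdiam b)) (by positivity))
        rw [mul_sum]
        refine sum_le_sum fun i hi => ?_
        obtain ⟨hiS, rfl⟩ := mem_filter.1 hi
        exact mul_le_mul_of_nonneg_right (one_div_sq_le_of_block hQ (mem_filter.1 hiS).2)
          (le_min (by positivity) (by positivity))
    _ = 10 / (q k : ℝ) ^ 2 * (88 * (q k : ℝ) * c) *
          ∑ b ∈ S.image block, 1 / ((1 : ℝ) ^ 2 + (b : ℝ) ^ 2) := by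
        rw [mul_sum]
        exact sum_congr rfl fun b _ => by ring
    _ ≤ 10 / (q k : ℝ) ^ 2 * (88 * (q k : ℝ) * c) * (8 / 1) := by
        refine mul_le_mul_of_nonneg_left (sum_one_div_sq_add_sq_le le_rfl _) ?_
        have : 0 < c := by linarith
        positivity
    _ = 7040 * c / (q k : ℝ) := by field_simp; norm_num
end

section
/- Counterexample to polynomial rigidity in C¹: Let α be irrational with convergent denominators q_n, and let φ(x) = (1/C)∑_{k≥2} (e^{2πiq_kx} + e^{−2πiq_kx})/(q_k(log q_k)²), where C > 0 is chosen so that Var(φ) < 1/2. Then φ is C¹ with mean zero, and there is a constant c > 0 (depending on α and φ) such that for all sufficiently large n, sup over T-invariant Borel probability measures ν of ∫ d(T^{q_n}(x,y),(x,y))² dν ≥ c/(log q_n)⁴, where T = T_{α,φ} is the Anzai skew product. -/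
open MeasureTheory

namespace GenContFract

theorem not_terminatedAt_of_irrational {α : ℝ} (hα : Irrational α) (n : ℕ) :
    ¬ (GenContFract.of α).TerminatedAt n := fun h =>
  let ⟨r, hr⟩ := exists_rat_eq_of_terminates ⟨n, h⟩
  hα ⟨r, hr.symm⟩

theorem exists_get?_s_of_irrational {α : ℝ} (hα : Irrational α) (n : ℕ) :
    ∃ b : ℤ, 1 ≤ b ∧ (GenContFract.of α).s.get? n = some ⟨1, (b : ℝ)⟩ := by
  obtain ⟨⟨a, b'⟩, hgp⟩ := Option.ne_none_iff_exists'.1 (not_terminatedAt_of_irrational hα n)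
  obtain ⟨ha, b, hb⟩ := of_partNum_eq_one_and_exists_int_partDen_eq hgp
  have h1 := of_one_le_get?_partDen (partDen_eq_s_b hgp)
  dsimp only at ha hb h1
  subst ha hb
  exact ⟨b, by exact_mod_cast h1, hgp⟩

theorem exists_int_eq_nums_of_irrational {α : ℝ} (hα : Irrational α) (n : ℕ) :
    ∃ p : ℤ, (GenContFract.of α).nums n = p := by
  induction n using Nat.twoStepInduction with
  | zero => exact ⟨⌊α⌋, by simp⟩
  | one =>
    obtain ⟨b, -, hb⟩ := exists_get?_s_of_irrational hα 0
    exact ⟨b * ⌊α⌋ + 1, by rw [first_num_eq hb]; simp⟩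
  | more n ih ih' =>
    obtain ⟨p, hp⟩ := ih
    obtain ⟨p', hp'⟩ := ih'
    obtain ⟨b, -, hb⟩ := exists_get?_s_of_irrational hα (n + 1)
    exact ⟨b * p' + 1 * p, by rw [nums_recurrence hb hp hp']; push_cast; ring⟩

theorem one_le_dens (α : ℝ) (n : ℕ) : 1 ≤ (GenContFract.of α).dens n := by
  induction n with
  | zero => simp
  | succ n ih => exact ih.trans of_den_mono

theorem dens_add_dens_le_of_irrational {α : ℝ} (hα : Irrational α) (n : ℕ) :
    (GenContFract.of α).dens n + (GenContFract.of α).dens (n + 1) ≤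
      (GenContFract.of α).dens (n + 2) := by
  obtain ⟨b, hb1, hb⟩ := exists_get?_s_of_irrational hα (n + 1)
  rw [dens_recurrence hb rfl rfl]
  have hb1 : (1 : ℝ) ≤ b := by exact_mod_cast hb1
  nlinarith [one_le_dens α (n + 1)]

/-- The `n`-th convergent of an irrational number, in lowest terms. -/
theorem exists_isCoprime_abs_dens_mul_sub_le {α : ℝ} (hα : Irrational α) {q : ℕ → ℕ}
    (hq : ∀ n, (q n : ℝ) = (GenContFract.of α).dens n) (n : ℕ) :
    ∃ p : ℤ, IsCoprime p (q n : ℤ) ∧ |q n * α - p| ≤ 1 / q (n + 1) := by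
  obtain ⟨p, hp⟩ := exists_int_eq_nums_of_irrational hα n
  obtain ⟨p', hp'⟩ := exists_int_eq_nums_of_irrational hα (n + 1)
  have hpos : (0 : ℝ) < q n := by rw [hq]; linarith [one_le_dens α n]
  refine ⟨p, ?_, ?_⟩
  · have hdet := (SimpContFract.determinant (s := SimpContFract.of α)
      (not_terminatedAt_of_irrational hα n))
    change (GenContFract.of α).nums n * (GenContFract.of α).dens (n + 1) -
      (GenContFract.of α).dens n * (GenContFract.of α).nums (n + 1) = _ at hdet
    rw [hp, hp', ← hq, ← hq] at hdet
    have hdet : p * q (n + 1) - q n * p' = (-1) ^ (n + 1) := by exact_mod_cast hdet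
    rcases neg_one_pow_eq_or ℤ (n + 1) with h | h <;> rw [h] at hdet
    · exact ⟨q (n + 1), -p', by linarith⟩
    · exact ⟨-q (n + 1), p', by linarith⟩
  · have h := abs_sub_convs_le (not_terminatedAt_of_irrational hα n)
    rw [conv_eq_num_div_den, hp, ← hq, ← hq] at h
    calc |q n * α - p| = q n * |α - p / q n| := by
          rw [← abs_of_pos hpos, ← abs_mul, abs_of_pos hpos]; congr 1; field_simp
      _ ≤ q n * (1 / (q n * q (n + 1))) := by gcongr
      _ = 1 / q (n + 1) := by field_simp

theorem two_pow_le_two_mul_dens_sq {α : ℝ} (hα : Irrational α) (n : ℕ) :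
    2 ^ n ≤ 2 * (GenContFract.of α).dens n ^ 2 := by
  induction n using Nat.twoStepInduction with
  | zero => simp
  | one => nlinarith [one_le_dens α 1]
  | more n ih _ =>
    have h1 := dens_add_dens_le_of_irrational hα n
    have h2 : (GenContFract.of α).dens n ≤ (GenContFract.of α).dens (n + 1) := of_den_mono
    have h3 := one_le_dens α n
    rw [pow_add]
    nlinarith

end GenContFract

theorem Function.Periodic.eVariationOn_Icc_add {f : ℝ → ℝ} (hf : Function.Periodic f 1) (s : ℝ) :
    eVariationOn f (Set.Icc s (s + 1)) = eVariationOn f (Set.Icc 0 1) := by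
  have shift (m : ℤ) (a b : ℝ) :
      eVariationOn f (Set.Icc (a + m) (b + m)) = eVariationOn f (Set.Icc a b) := by
    have h := eVariationOn.comp_eq_of_monotoneOn f (t := Set.Icc a b) (fun x => x + (m : ℝ))
      (fun x _ y _ hxy => by dsimp only; gcongr)
    rw [Set.image_add_const_Icc] at h
    rw [← h]
    congr 1
    ext x
    simpa using hf.int_mul m x
  have hadd {a b c : ℝ} (hab : a ≤ b) (hbc : b ≤ c) :
      eVariationOn f (Set.Icc a b) + eVariationOn f (Set.Icc b c) =
        eVariationOn f (Set.Icc a c) := by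
    simpa using eVariationOn.Icc_add_Icc f (s := Set.univ) hab hbc trivial
  have h0 := Int.fract_nonneg s
  have h1 := (Int.fract_lt_one s).le
  have hs : Set.Icc s (s + 1) =
      Set.Icc (Int.fract s + (⌊s⌋ : ℤ)) (Int.fract s + 1 + (⌊s⌋ : ℤ)) := by
    congr 1 <;> linarith [Int.fract_add_floor s]
  rw [hs, shift, ← hadd h1 (by linarith), ← hadd h0 h1, add_comm]
  congr 1
  simpa using shift 1 0 (Int.fract s)

theorem BoundedVariationOn.abs_sub_integral_le {f : ℝ → ℝ} (hf : Continuous f) {a b y : ℝ}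
    (hV : BoundedVariationOn f (Set.Icc a b)) (hab : a < b) (hy : y ∈ Set.Icc a b) :
    |f y - (b - a)⁻¹ * ∫ t in a..b, f t| ≤ (eVariationOn f (Set.Icc a b)).toReal := by
  have hba : 0 < b - a := sub_pos.2 hab
  have h : f y - (b - a)⁻¹ * ∫ t in a..b, f t = (b - a)⁻¹ * ∫ t in a..b, (f y - f t) := by
    rw [intervalIntegral.integral_sub (by simp) (hf.intervalIntegrable _ _)]
    simp; field_simp
  rw [h, abs_mul, abs_of_pos (inv_pos.2 hba), inv_mul_le_iff₀ hba, mul_comm (b - a)]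
  have := intervalIntegral.norm_integral_le_of_norm_le_const (a := a) (b := b)
    (f := fun t => f y - f t) (C := (eVariationOn f (Set.Icc a b)).toReal) (fun t ht => by
      rw [Set.uIoc_of_le hab.le] at ht
      rw [← dist_eq_norm]
      exact hV.dist_le hy (Set.Ioc_subset_Icc_self ht))
  rwa [Real.norm_eq_abs, abs_of_pos hba] at this

theorem Int.sum_range_emod_mul {M : Type*} [AddCommMonoid M] {q : ℕ} (hq : 0 < q) {p : ℤ}
    (hp : IsCoprime p q) (g : ℕ → M) :
    ∑ j ∈ Finset.range q, g (((j * p : ℤ) % q).toNat) = ∑ i ∈ Finset.range q, g i := by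
  have hq' : (0 : ℤ) < q := by exact_mod_cast hq
  have hmaps : Set.MapsTo (fun j : ℕ => ((j * p : ℤ) % q).toNat) (Finset.range q)
      (Finset.range q) := fun j _ => by
    have := Int.emod_lt_of_pos (j * p : ℤ) hq'
    simp only [Finset.coe_range, Set.mem_Iio]
    omega
  have hinj : Set.InjOn (fun j : ℕ => ((j * p : ℤ) % q).toNat) (Finset.range q) := by
    intro i hi j hj hij
    simp only [Finset.coe_range, Set.mem_Iio] at hi hj
    have h1 := Int.emod_nonneg (i * p : ℤ) hq'.ne'
    have h2 := Int.emod_nonneg (j * p : ℤ) hq'.ne'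
    have h3 : (i * p : ℤ) % q = (j * p : ℤ) % q := by dsimp only at hij; omega
    have h4 : (q : ℤ) ∣ i - j := by
      refine hp.symm.dvd_of_dvd_mul_right ?_
      rw [sub_mul]
      exact Int.ModEq.dvd h3.symm
    have h5 : (i : ℤ) ≡ j [ZMOD q] := (Int.modEq_iff_dvd.2 h4).symm
    exact Nat.ModEq.eq_of_lt_of_lt (Int.natCast_modEq_iff.1 h5) hi hj
  exact Finset.sum_nbij _ hmaps hinj
    (Finset.surjOn_of_injOn_of_card_le _ hmaps hinj le_rfl) fun _ _ => rfl

/-- The **Denjoy–Koksma inequality**. -/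
theorem Function.Periodic.abs_sum_sub_integral_le_eVariationOn {f : ℝ → ℝ}
    (hper : Function.Periodic f 1) (hf : Continuous f)
    (hV : BoundedVariationOn f (Set.Icc 0 1)) {α : ℝ} {q : ℕ} (hq : 0 < q) {p : ℤ}
    (hp : IsCoprime p q) (hα : |q * α - p| ≤ 1 / q) (x : ℝ) :
    |∑ j ∈ Finset.range q, f (x + j * α) - q * ∫ t in (0 : ℝ)..1, f t| ≤
      (eVariationOn f (Set.Icc 0 1)).toReal := by
  have hq0 : (0 : ℝ) < q := by exact_mod_cast hq
  obtain ⟨δ, hδ⟩ : ∃ δ, δ = α - p / q := ⟨_, rfl⟩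
  have hδq : |δ| * (q * q) ≤ 1 := by
    have : q * α - p = q * δ := by rw [hδ]; field_simp
    rw [this, abs_mul, abs_of_pos hq0, le_div_iff₀ hq0] at hα
    linarith
  -- the partition of a period into `q` intervals, each containing one point of the orbit
  obtain ⟨s, hs⟩ : ∃ s : ℝ, ∀ j : ℕ, j < q → s ≤ x + j * δ ∧ x + j * δ ≤ s + 1 / q := by
    have key (j : ℕ) (hj : j < q) : j * |δ| ≤ 1 / q := by
      rw [le_div_iff₀ hq0]
      have : (j : ℝ) ≤ q := by exact_mod_cast hj.le
      nlinarith [mul_le_mul_of_nonneg_right this (mul_nonneg (abs_nonneg δ) hq0.le)]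
    rcases le_total 0 δ with h | h
    · refine ⟨x, fun j hj => ?_⟩
      have := key j hj
      rw [abs_of_nonneg h] at this
      constructor <;> nlinarith [mul_nonneg (Nat.cast_nonneg (α := ℝ) j) h]
    · refine ⟨x - 1 / q, fun j hj => ?_⟩
      have := key j hj
      rw [abs_of_nonpos h] at this
      constructor <;> nlinarith [mul_nonneg (Nat.cast_nonneg (α := ℝ) j) (neg_nonneg.2 h)]
  let I : ℕ → ℝ := fun i => s + i / q
  have hI : Monotone I := fun i j hij => by dsimp only [I]; gcongr
  have hI0 : I 0 = s := by simp [I]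
  have hIq : I q = s + 1 := by simp [I, hq0.ne']
  have hIsub (i : ℕ) : I (i + 1) - I i = 1 / q := by simp only [I]; push_cast; ring
  have hVar : ∑ i ∈ Finset.range q, eVariationOn f (Set.Icc (I i) (I (i + 1))) =
      eVariationOn f (Set.Icc 0 1) := by
    rw [eVariationOn.sum' f hI, hI0, hIq, hper.eVariationOn_Icc_add]
  have hVi (i : ℕ) (hi : i ∈ Finset.range q) :
      BoundedVariationOn f (Set.Icc (I i) (I (i + 1))) := by
    refine ne_top_of_le_ne_top hV ?_
    rw [← hVar]
    exact Finset.single_le_sum (f := fun i => eVariationOn f (Set.Icc (I i) (I (i + 1))))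
      (fun _ _ => zero_le) hi
  have hint : ∑ i ∈ Finset.range q, ∫ t in I i..I (i + 1), f t = ∫ t in (0 : ℝ)..1, f t := by
    rw [intervalIntegral.sum_integral_adjacent_intervals
      fun _ _ => hf.intervalIntegrable _ _, hI0, hIq, hper.intervalIntegral_add_eq s 0, zero_add]
  let r : ℕ → ℕ := fun j => ((j * p : ℤ) % q).toNat
  have hr (j : ℕ) : (r j : ℤ) = (j * p : ℤ) % q :=
    Int.toNat_of_nonneg (Int.emod_nonneg _ (by exact_mod_cast hq.ne'))
  have hr_mem (j : ℕ) : r j ∈ Finset.range q := by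
    have := Int.emod_lt_of_pos (j * p : ℤ) (by exact_mod_cast hq : (0 : ℤ) < q)
    have := hr j
    rw [Finset.mem_range]
    omega
  have hterm (j : ℕ) (hj : j ∈ Finset.range q) :
      |f (x + j * α) - q * ∫ t in I (r j)..I (r j + 1), f t| ≤
        (eVariationOn f (Set.Icc (I (r j)) (I (r j + 1)))).toReal := by
    have hy : f (x + j * α) = f (x + j * δ + r j / q) := by
      have h1 : (j * p : ℝ) = r j + q * ((j * p : ℤ) / q : ℤ) := by
        have := Int.emod_add_mul_ediv (j * p : ℤ) q
        rw [← hr] at this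
        exact_mod_cast this.symm
      have h2 : x + j * α = x + j * δ + r j / q + ((j * p : ℤ) / q : ℤ) * 1 := by
        have : α = δ + p / q := by rw [hδ]; ring
        rw [this]
        field_simp
        linarith
      rw [h2, hper.int_mul]
    obtain ⟨h1, h2⟩ := hs j (Finset.mem_range.1 hj)
    have h3 := hIsub (r j)
    have := (hVi _ (hr_mem j)).abs_sub_integral_le hf (y := x + j * δ + r j / q)
      (sub_pos.1 (by rw [h3]; positivity))
      ⟨by simp only [I]; linarith, by simp only [I]; push_cast; rw [add_div]; linarith⟩
    rwa [h3, one_div, inv_inv, ← hy] at this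
  calc _ = |∑ j ∈ Finset.range q, (f (x + j * α) - q * ∫ t in I (r j)..I (r j + 1), f t)| := by
        rw [Finset.sum_sub_distrib, ← Finset.mul_sum,
          Int.sum_range_emod_mul hq hp (fun i => ∫ t in I i..I (i + 1), f t), hint]
    _ ≤ ∑ j ∈ Finset.range q, (eVariationOn f (Set.Icc (I (r j)) (I (r j + 1)))).toReal :=
        (Finset.abs_sum_le_sum_abs _ _).trans (Finset.sum_le_sum hterm)
    _ = _ := by
        rw [Int.sum_range_emod_mul hq hp
          (fun i => (eVariationOn f (Set.Icc (I i) (I (i + 1)))).toReal),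
          ← ENNReal.toReal_sum hVi, hVar]

theorem two_mul_div_pi_le_norm_geom_sum_exp {β : ℝ} {N : ℕ} (h : N * |β| ≤ 1 / 2) :
    2 * N / Real.pi ≤
      ‖∑ j ∈ Finset.range N, Complex.exp (Complex.I * (2 * Real.pi * β : ℝ)) ^ j‖ := by
  have hpi := Real.pi_pos
  rcases eq_or_ne β 0 with rfl | hβ
  · rw [div_le_iff₀ hpi]
    simp only [mul_zero, Complex.ofReal_zero, Complex.exp_zero, one_pow, Finset.sum_const,
      Finset.card_range, nsmul_eq_mul, mul_one, Complex.norm_natCast]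
    nlinarith [Real.two_le_pi, Nat.cast_nonneg (α := ℝ) N]
  have hβ' : 0 < |β| := abs_pos.2 hβ
  have h1 := congrArg norm
    (geom_sum_mul (Complex.exp (Complex.I * (2 * Real.pi * β : ℝ))) N)
  have h2 : Complex.exp (Complex.I * (2 * Real.pi * β : ℝ)) ^ N =
      Complex.exp (Complex.I * (2 * Real.pi * (N * β) : ℝ)) := by
    rw [← Complex.exp_nat_mul]; congr 1; push_cast; ring
  rw [norm_mul, h2, Complex.norm_exp_I_mul_ofReal_sub_one (2 * Real.pi * (N * β))] at h1
  have h3 := Real.norm_exp_I_mul_ofReal_sub_one_le (x := 2 * Real.pi * β)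
  have h4 : 4 * (N * |β|) ≤ ‖2 * Real.sin (2 * Real.pi * (N * β) / 2)‖ := by
    have hsin := Real.mul_le_sin (x := Real.pi * (N * |β|)) (by positivity) (by nlinarith)
    have habs : |Real.sin (2 * Real.pi * (N * β) / 2)| = |Real.sin (Real.pi * (N * |β|))| := by
      rw [show 2 * Real.pi * (N * β) / 2 = Real.pi * (N * β) by ring]
      rcases abs_choice β with h | h <;> rw [h]
      rw [mul_neg, mul_neg, Real.sin_neg, abs_neg]
    rw [norm_mul, Real.norm_eq_abs, Real.norm_eq_abs, habs, abs_two]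
    have : 2 / Real.pi * (Real.pi * (N * |β|)) = 2 * (N * |β|) := by field_simp
    linarith [le_abs_self (Real.sin (Real.pi * (N * |β|)))]
  rw [Real.norm_eq_abs, abs_mul, abs_of_pos (by positivity : 0 < 2 * Real.pi)] at h3
  rw [div_le_iff₀ hpi]
  have h5 := mul_le_mul_of_nonneg_left h3
    (norm_nonneg (∑ j ∈ Finset.range N, Complex.exp (Complex.I * (2 * Real.pi * β : ℝ)) ^ j))
  rw [h1] at h5
  refine le_of_mul_le_mul_right ?_ hβ'
  linarith

theorem two_mul_div_pi_le_norm_geom_sum_fourier {α : ℝ} {m p : ℤ} {N : ℕ}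
    (h : N * |m * α - p| ≤ 1 / 2) :
    2 * N / Real.pi ≤ ‖∑ j ∈ Finset.range N, fourier m (α : AddCircle (1 : ℝ)) ^ j‖ := by
  convert two_mul_div_pi_le_norm_geom_sum_exp h using 5
  rw [fourier_coe_apply, ← Complex.exp_periodic.sub_int_mul_eq p]
  congr 1
  push_cast
  ring

theorem fourier_coe_ne_one {α : ℝ} (hα : Irrational α) {m : ℤ} (hm : m ≠ 0) :
    fourier m (α : AddCircle (1 : ℝ)) ≠ 1 := by
  rw [fourier_coe_apply, Ne, Complex.exp_eq_one_iff]
  rintro ⟨n, hn⟩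
  have h : (m : ℂ) * α = n := by
    have := Complex.two_pi_I_ne_zero
    apply mul_left_cancel₀ this
    push_cast at hn
    linear_combination hn
  have h' : (m : ℝ) * α = n := by exact_mod_cast h
  exact (hα.intCast_mul hm).ne_int n h'

theorem fourier_iterate {X : Type*} {T : X → X} {r : X → AddCircle (1 : ℝ)} {α : ℝ}
    (hrT : ∀ x, r (T x) = r x + α) (m : ℤ) (j : ℕ) (x : X) :
    fourier m (r (T^[j] x)) = fourier m (α : AddCircle (1 : ℝ)) ^ j * fourier m (r x) := by
  induction j with
  | zero => simp
  | succ j ih =>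
    rw [Function.iterate_succ_apply', hrT, fourier_apply, smul_add, AddCircle.toCircle_add,
      Circle.coe_mul, ← fourier_apply, ← fourier_apply, ih]
    ring

section Rotation

variable {X : Type*} [MeasurableSpace X] {ν : Measure X} {T : X → X}
  {r : X → AddCircle (1 : ℝ)} {α : ℝ}

/-- The nontrivial Fourier coefficients of an invariant measure of an irrational rotation
vanish. -/
theorem integral_fourier_eq_zero (hT : MeasurePreserving T ν ν) (hr : Measurable r)
    (hrT : ∀ x, r (T x) = r x + α) (hα : Irrational α) {m : ℤ} (hm : m ≠ 0) :
    ∫ x, fourier m (r x) ∂ν = 0 := by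
  have hmeas : Measurable fun x => fourier m (r x) :=
    (fourier m).continuous.measurable.comp hr
  have h : ∫ x, fourier m (r x) ∂ν =
      fourier m (α : AddCircle (1 : ℝ)) * ∫ x, fourier m (r x) ∂ν := by
    conv_lhs => rw [← hT.map_eq]
    rw [integral_map hT.aemeasurable hmeas.aestronglyMeasurable, ← integral_const_mul]
    refine integral_congr_ae (.of_forall fun x => ?_)
    simpa using fourier_iterate hrT m 1 x
  by_contra h0
  exact fourier_coe_ne_one hα hm (mul_right_cancel₀ h0 (by rw [one_mul]; exact h.symm))

theorem integral_fourier_eq_ite [IsProbabilityMeasure ν] (hT : MeasurePreserving T ν ν)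
    (hr : Measurable r) (hrT : ∀ x, r (T x) = r x + α) (hα : Irrational α) (m : ℤ) :
    ∫ x, fourier m (r x) ∂ν = if m = 0 then 1 else 0 := by
  split_ifs with hm
  · simp [hm]
  · exact integral_fourier_eq_zero hT hr hrT hα hm

/-- The Fourier coefficients of a cosine series with respect to an invariant measure of an
irrational rotation. -/
theorem integral_mul_fourier_neg [IsProbabilityMeasure ν] (hT : MeasurePreserving T ν ν)
    (hr : Measurable r) (hrT : ∀ x, r (T x) = r x + α) (hα : Irrational α)
    {a : ℕ → ℝ} {q : ℕ → ℕ} (ha : Summable a) (ha0 : ∀ k, 0 ≤ a k)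
    {F : AddCircle (1 : ℝ) → ℝ}
    (hF : ∀ z, HasSum (fun k => (a k : ℂ) * (fourier (q k) z + fourier (-(q k : ℤ)) z)) (F z))
    {l : ℕ} (hl : 0 < q l) (hinj : ∀ k, a k ≠ 0 → q k = q l → k = l) :
    ∫ x, (F (r x) : ℂ) * fourier (-(q l : ℤ)) (r x) ∂ν = a l := by
  have hmeas (m : ℤ) : Measurable fun x => fourier m (r x) :=
    (fourier m).continuous.measurable.comp hr
  have hint (m : ℤ) : Integrable (fun x => fourier m (r x)) ν :=
    .of_bound (hmeas m).aestronglyMeasurable 1 (.of_forall fun x => by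
      rw [fourier_apply, Circle.norm_coe])
  let g : ℕ → X → ℂ := fun k x =>
    (a k : ℂ) * (fourier (q k - q l : ℤ) (r x) + fourier (-(q k : ℤ) - q l) (r x))
  have hg (k : ℕ) : Integrable (g k) ν := ((hint _).add (hint _)).const_mul _
  have hgnorm (k : ℕ) : ∫ x, ‖g k x‖ ∂ν ≤ 2 * a k := by
    have : ∀ x, ‖g k x‖ ≤ 2 * a k := fun x => by
      simp only [g]
      rw [norm_mul, Complex.norm_real, Real.norm_of_nonneg (ha0 k), mul_comm]
      refine mul_le_mul_of_nonneg_right ((norm_add_le _ _).trans ?_) (ha0 k)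
      rw [fourier_apply, fourier_apply, Circle.norm_coe, Circle.norm_coe]
      norm_num
    simpa using integral_mono (hg k).norm (integrable_const (μ := ν) (2 * a k)) this
  have hsum := hasSum_integral_of_summable_integral_norm hg
    (.of_nonneg_of_le (fun k => integral_nonneg fun x => norm_nonneg _) hgnorm (ha.mul_left 2))
  have htsum (x : X) : ∑' k, g k x = (F (r x) : ℂ) * fourier (-(q l : ℤ)) (r x) := by
    refine HasSum.tsum_eq ?_
    refine ((hF (r x)).mul_right (fourier (-(q l : ℤ)) (r x))).congr_fun fun k => ?_
    simp only [g, sub_eq_add_neg, fourier_add]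
    ring
  simp only [htsum] at hsum
  refine hsum.unique ?_
  refine (hasSum_ite_eq l (a l : ℂ)).congr_fun fun k => ?_
  simp only [g]
  rw [integral_const_mul, integral_add (hint _) (hint _), integral_fourier_eq_ite hT hr hrT hα,
    integral_fourier_eq_ite hT hr hrT hα, if_neg (by omega : ¬ (-(q k : ℤ) - q l = 0))]
  rcases eq_or_ne k l with rfl | hk
  · simp
  · rw [if_neg hk]
    rcases eq_or_ne (a k) 0 with h0 | h0
    · simp [h0]
    · rw [if_neg fun h => hk (hinj k h0 (by omega))]
      simp

theorem sq_norm_integral_le_integral_sq [IsProbabilityMeasure ν] {f : X → ℂ}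
    (hf : Integrable f ν) (hf2 : Integrable (fun x => ‖f x‖ ^ 2) ν) :
    ‖∫ x, f x ∂ν‖ ^ 2 ≤ ∫ x, ‖f x‖ ^ 2 ∂ν := by
  have h : ∫ x, (2 * ‖∫ x, f x ∂ν‖ * ‖f x‖ - ‖∫ x, f x ∂ν‖ ^ 2) ∂ν ≤ ∫ x, ‖f x‖ ^ 2 ∂ν :=
    integral_mono ((hf.norm.const_mul _).sub (integrable_const _)) hf2 fun x => by
      dsimp only
      nlinarith [sq_nonneg (‖∫ x, f x ∂ν‖ - ‖f x‖)]
  rw [integral_sub (hf.norm.const_mul _) (integrable_const _), integral_const_mul,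
    integral_const, probReal_univ, one_smul] at h
  nlinarith [norm_integral_le_integral_norm (μ := ν) f, norm_nonneg (∫ x, f x ∂ν)]

/-- A lower bound for the `L²` norm of Birkhoff sums of a cosine series over an irrational
rotation, from a single frequency. -/
theorem sq_le_integral_birkhoffSum_sq [IsProbabilityMeasure ν] (hT : MeasurePreserving T ν ν)
    (hr : Measurable r) (hrT : ∀ x, r (T x) = r x + α) (hα : Irrational α)
    {a : ℕ → ℝ} {q : ℕ → ℕ} (ha : Summable a) (ha0 : ∀ k, 0 ≤ a k)
    {F : AddCircle (1 : ℝ) → ℝ} (hFc : Continuous F)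
    (hF : ∀ z, HasSum (fun k => (a k : ℂ) * (fourier (q k) z + fourier (-(q k : ℤ)) z)) (F z))
    {l : ℕ} (hl : 0 < q l) (hinj : ∀ k, a k ≠ 0 → q k = q l → k = l)
    {p : ℤ} {N : ℕ} (hN : N * |q l * α - p| ≤ 1 / 2) :
    (2 * N / Real.pi * a l) ^ 2 ≤ ∫ x, birkhoffSum T (F ∘ r) N x ^ 2 ∂ν := by
  obtain ⟨B, hB⟩ := isCompact_univ.exists_bound_of_continuousOn hFc.continuousOn
  have hFm : Measurable fun x => F (r x) := hFc.measurable.comp hr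
  have hTj (j : ℕ) : MeasurePreserving T^[j] ν ν := hT.iterate j
  have hfm : Measurable fun x => fourier (-(q l : ℤ)) (r x) :=
    (fourier (-(q l : ℤ))).continuous.measurable.comp hr
  have hnorm (x : X) : ‖fourier (-(q l : ℤ)) (r x)‖ = 1 := by
    rw [fourier_apply, Circle.norm_coe]
  have hbound (x : X) : ‖birkhoffSum T (F ∘ r) N x‖ ≤ N * B := by
    rw [birkhoffSum]
    exact (norm_sum_le_of_le _ fun j _ => hB (r (T^[j] x)) trivial).trans (by simp)
  have hSm : Measurable (birkhoffSum T (F ∘ r) N) := by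
    have : birkhoffSum T (F ∘ r) N = fun x => ∑ j ∈ Finset.range N, F (r (T^[j] x)) := rfl
    rw [this]
    exact Finset.measurable_sum _ fun j _ => hFm.comp (hTj j).measurable
  let f : X → ℂ := fun x => ((birkhoffSum T (F ∘ r) N x : ℝ) : ℂ) * fourier (-(q l : ℤ)) (r x)
  have hfnorm (x : X) : ‖f x‖ = ‖birkhoffSum T (F ∘ r) N x‖ := by
    simp only [f, norm_mul, hnorm, mul_one, Complex.norm_real]
  have hf_meas : Measurable f := (Complex.measurable_ofReal.comp hSm).mul hfm
  have key : ∫ x, f x ∂ν =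
      (∑ j ∈ Finset.range N, fourier (q l) (α : AddCircle (1 : ℝ)) ^ j) * a l := by
    have hGm : Measurable fun x => (F (r x) : ℂ) * fourier (-(q l : ℤ)) (r x) :=
      (Complex.measurable_ofReal.comp hFm).mul hfm
    have hG : Integrable (fun x => (F (r x) : ℂ) * fourier (-(q l : ℤ)) (r x)) ν :=
      .of_bound hGm.aestronglyMeasurable B (.of_forall fun x => by
        rw [norm_mul, hnorm, mul_one, Complex.norm_real]; exact hB _ trivial)
    have hfeq : f = fun x => ∑ j ∈ Finset.range N, fourier (q l) (α : AddCircle (1 : ℝ)) ^ j *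
        ((F (r (T^[j] x)) : ℂ) * fourier (-(q l : ℤ)) (r (T^[j] x))) := by
      ext x
      simp only [f, birkhoffSum, Complex.ofReal_sum, Finset.sum_mul, Function.comp_apply]
      refine Finset.sum_congr rfl fun j _ => ?_
      have h1 : fourier (q l) (α : AddCircle (1 : ℝ)) *
          fourier (-(q l : ℤ)) (α : AddCircle (1 : ℝ)) = 1 := by
        rw [← fourier_add, add_neg_cancel, fourier_zero]
      rw [fourier_iterate hrT]
      linear_combination (-(F (r (T^[j] x)) : ℂ) * fourier (-(q l : ℤ)) (r x)) *
        ((mul_pow _ _ j).symm.trans ((congrArg (· ^ j) h1).trans (one_pow j)))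
    have hGj (j : ℕ) : Integrable (fun x => fourier (q l) (α : AddCircle (1 : ℝ)) ^ j *
        ((F (r (T^[j] x)) : ℂ) * fourier (-(q l : ℤ)) (r (T^[j] x)))) ν :=
      ((hTj j).integrable_comp_of_integrable hG).const_mul _
    rw [hfeq, integral_finsetSum _ fun j _ => hGj j, Finset.sum_mul]
    refine Finset.sum_congr rfl fun j _ => ?_
    rw [integral_const_mul, ← integral_mul_fourier_neg hT hr hrT hα ha ha0 hF hl hinj]
    congr 1
    conv_rhs => rw [← (hTj j).map_eq]
    rw [integral_map (hTj j).aemeasurable hGm.aestronglyMeasurable]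
  have hle := sq_norm_integral_le_integral_sq (ν := ν) (f := f)
    (.of_bound hf_meas.aestronglyMeasurable (N * B) (.of_forall fun x => by
      rw [hfnorm]; exact hbound x))
    (.of_bound (hf_meas.norm.pow_const 2).aestronglyMeasurable ((N * B) ^ 2)
      (.of_forall fun x => by
        rw [norm_pow, norm_norm, hfnorm]
        exact pow_le_pow_left₀ (norm_nonneg _) (hbound x) 2))
  simp only [hfnorm, Real.norm_eq_abs, sq_abs] at hle
  refine le_trans ?_ hle
  rw [key, norm_mul, Complex.norm_real, Real.norm_of_nonneg (ha0 l)]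
  have hgeom := two_mul_div_pi_le_norm_geom_sum_fourier (α := α) (m := q l) (p := p) (N := N)
    (by exact_mod_cast hN)
  have := ha0 l
  gcongr

end Rotation

theorem norm_cos_term_le (c y : ℝ) : ‖2 * c * Real.cos y‖ ≤ 2 * |c| := by
  rw [Real.norm_eq_abs, abs_mul, abs_mul, abs_two]
  exact mul_le_of_le_one_right (by positivity) (Real.abs_cos_le_one _)

theorem contDiff_one_tsum_cos {a : ℕ → ℝ} {q : ℕ → ℕ} (ha : Summable fun k => |a k|)
    (haq : Summable fun k => |a k| * q k) :
    ContDiff ℝ 1 fun x : ℝ => ∑' k, 2 * a k * Real.cos (2 * Real.pi * q k * x) := by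
  have hbound (k : ℕ) (x : ℝ) :
      ‖2 * a k * (-Real.sin (2 * Real.pi * q k * x) * (2 * Real.pi * q k))‖ ≤
        4 * Real.pi * (|a k| * q k) := by
    have h1 : |Real.sin (2 * Real.pi * q k * x)| ≤ 1 := Real.abs_sin_le_one _
    rw [Real.norm_eq_abs]
    simp only [abs_mul, abs_neg, abs_two, abs_of_pos Real.pi_pos, Nat.abs_cast]
    calc 2 * |a k| * (|Real.sin (2 * Real.pi * q k * x)| * (2 * Real.pi * q k))
        ≤ 2 * |a k| * (1 * (2 * Real.pi * q k)) := by gcongr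
      _ = _ := by ring
  have hd (x : ℝ) := hasDerivAt_tsum (haq.mul_left (4 * Real.pi))
    (g := fun k (x : ℝ) => 2 * a k * Real.cos (2 * Real.pi * q k * x))
    (g' := fun k x => 2 * a k * (-Real.sin (2 * Real.pi * q k * x) * (2 * Real.pi * q k)))
    (fun k y => (((hasDerivAt_id y).const_mul _).cos.const_mul _).congr_deriv (by simp))
    hbound (y₀ := 0)
    (.of_norm_bounded (ha.mul_left 2) fun k => norm_cos_term_le _ _) x
  rw [contDiff_one_iff_deriv]
  refine ⟨fun x => (hd x).differentiableAt, ?_⟩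
  rw [funext fun x => (hd x).deriv]
  exact continuous_tsum (fun k => by fun_prop) (haq.mul_left (4 * Real.pi)) hbound

theorem integral_tsum_cos_eq_zero {a : ℕ → ℝ} {q : ℕ → ℕ} (ha : Summable fun k => |a k|)
    (hq : ∀ k, a k ≠ 0 → q k ≠ 0) :
    ∫ x in (0 : ℝ)..1, ∑' k, 2 * a k * Real.cos (2 * Real.pi * q k * x) = 0 := by
  let f : ℕ → C(ℝ, ℝ) := fun k =>
    ⟨fun x => 2 * a k * Real.cos (2 * Real.pi * q k * x), by fun_prop⟩
  have h := intervalIntegral.hasSum_intervalIntegral_of_summable_norm (a := (0 : ℝ)) (b := 1) (f := f)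
    (.of_nonneg_of_le (fun _ => norm_nonneg _)
      (fun k => (ContinuousMap.norm_le _ (by positivity)).2 fun x => norm_cos_term_le _ _)
      (ha.mul_left 2))
  refine h.unique (hasSum_zero.congr_fun fun k => ?_)
  change ∫ x in (0 : ℝ)..1, 2 * a k * Real.cos (2 * Real.pi * q k * x) = 0
  rw [intervalIntegral.integral_const_mul]
  rcases eq_or_ne (a k) 0 with h0 | h0
  · simp [h0]
  · have : (2 * Real.pi * q k : ℝ) ≠ 0 := by
      have := hq k h0
      positivity
    rw [intervalIntegral.integral_comp_mul_left _ this, integral_cos]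
    have : Real.sin (2 * Real.pi * q k * 1) = 0 := by
      rw [mul_one]; convert Real.sin_nat_mul_pi (2 * q k) using 2; push_cast; ring
    rw [this, mul_zero, Real.sin_zero, sub_zero, smul_zero, mul_zero]

theorem periodic_tsum_cos (a : ℕ → ℝ) (q : ℕ → ℕ) :
    Function.Periodic (fun x : ℝ => ∑' k, 2 * a k * Real.cos (2 * Real.pi * q k * x)) 1 := by
  intro x
  refine tsum_congr fun k => ?_
  rw [← Real.cos_add_nat_mul_two_pi (2 * Real.pi * q k * x) (q k)]
  ring_nf

theorem hasSum_fourier_tsum_cos {a : ℕ → ℝ} {q : ℕ → ℕ} (ha : Summable fun k => |a k|) (x : ℝ) :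
    HasSum (fun k => (a k : ℂ) *
      (fourier (q k) (x : AddCircle (1 : ℝ)) + fourier (-(q k : ℤ)) (x : AddCircle (1 : ℝ))))
      ((∑' k, 2 * a k * Real.cos (2 * Real.pi * q k * x) : ℝ) : ℂ) := by
  have hs : Summable fun k => 2 * a k * Real.cos (2 * Real.pi * q k * x) :=
    .of_norm_bounded (ha.mul_left 2) fun k => norm_cos_term_le _ _
  refine (Complex.hasSum_ofReal.2 hs.hasSum).congr_fun fun k => ?_
  rw [fourier_coe_apply, fourier_coe_apply]
  push_cast
  rw [Complex.cos]
  ring_nf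

theorem Function.Periodic.liftIco_coe {f : ℝ → ℝ} (hf : Function.Periodic f 1) (x : ℝ) :
    AddCircle.liftIco 1 0 f (x : AddCircle (1 : ℝ)) = f x := by
  rw [← AddCircle.coe_fract,
    AddCircle.liftIco_zero_coe_apply ⟨Int.fract_nonneg x, Int.fract_lt_one x⟩]
  simpa [← Int.self_sub_floor] using hf.sub_int_mul_eq (x := x) ⌊x⌋

/-- Iterates of a skew product over a rotation. -/
theorem iterate_skewProduct {G H : Type*} [AddCommGroup G] [AddCommGroup H] (F : G → ℝ)
    (α : G) (i : ℝ →+ H) (N : ℕ) (z : G × H) :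
    (fun p : G × H => (p.1 + α, p.2 + i (F p.1)))^[N] z =
      (z.1 + N • α,
        z.2 + i (birkhoffSum (fun p : G × H => (p.1 + α, p.2 + i (F p.1))) (F ∘ Prod.fst) N z)) := by
  induction N with
  | zero => simp
  | succ N ih =>
    rw [birkhoffSum_succ, Function.iterate_succ_apply', map_add, Function.comp_apply, ih]
    simp [add_assoc, succ_nsmul]

/-- Among the convergents of index `n` and `n + 1` there is one whose denominator is comparable
to `q n` and whose error is at most `1 / (2 * q n)`. -/
theorem exists_dens_le_two_mul_and_mul_abs_le {α : ℝ} (hα : Irrational α) {q : ℕ → ℕ}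
    (hq : ∀ n, (q n : ℝ) = (GenContFract.of α).dens n) (n : ℕ) :
    ∃ l ≥ n, ∃ p : ℤ, (q l : ℝ) ≤ 2 * q n ∧ q n * |q l * α - p| ≤ 1 / 2 := by
  have hpos (k : ℕ) : (0 : ℝ) < q k := by
    rw [hq]; linarith [GenContFract.one_le_dens α k]
  have hmono : (q n : ℝ) ≤ q (n + 1) := by rw [hq, hq]; exact GenContFract.of_den_mono
  have hadd : (q n : ℝ) + q (n + 1) ≤ q (n + 2) := by
    rw [hq, hq, hq]; exact GenContFract.dens_add_dens_le_of_irrational hα n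
  obtain ⟨p, -, hp⟩ := GenContFract.exists_isCoprime_abs_dens_mul_sub_le hα hq n
  obtain ⟨p', -, hp'⟩ := GenContFract.exists_isCoprime_abs_dens_mul_sub_le hα hq (n + 1)
  rw [le_div_iff₀ (hpos _)] at hp hp'
  by_cases h : q n * |q n * α - p| ≤ 1 / 2
  · exact ⟨n, le_rfl, p, by linarith [hpos n], h⟩
  · refine ⟨n + 1, n.le_succ, p', ?_, ?_⟩
    · push Not at h
      by_contra! h'
      nlinarith [abs_nonneg (q n * α - p)]
    · nlinarith [abs_nonneg (q (n + 1) * α - p')]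

/-- The denominators of the convergents strictly increase from index `1` on. -/
theorem strictMonoOn_dens {α : ℝ} (hα : Irrational α) {q : ℕ → ℕ}
    (hq : ∀ n, (q n : ℝ) = (GenContFract.of α).dens n) : StrictMonoOn q (Set.Ici 1) := by
  refine strictMonoOn_of_lt_add_one Set.ordConnected_Ici fun n _ hn _ => ?_
  obtain ⟨m, rfl⟩ : ∃ m, n = m + 1 := ⟨n - 1, by have : 1 ≤ n := hn; omega⟩
  have h := GenContFract.dens_add_dens_le_of_irrational hα m
  have h1 := GenContFract.one_le_dens α m
  rw [← hq] at h h1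
  rw [← hq, ← hq] at h
  have : (q (m + 1) : ℝ) < q (m + 2) := by linarith
  exact_mod_cast this

/-- The coefficients `1 / (C q_k (log q_k)²)`, for `k ≥ 2`. -/
noncomputable def logCoeff (C : ℝ) (q : ℕ → ℕ) (k : ℕ) : ℝ :=
  if 2 ≤ k then 1 / (C * (q k * Real.log (q k) ^ 2)) else 0

theorem logCoeff_nonneg {C : ℝ} (hC : 0 < C) (q : ℕ → ℕ) (k : ℕ) : 0 ≤ logCoeff C q k := by
  rw [logCoeff]
  split_ifs <;> positivity

theorem summable_logCoeff_mul {C : ℝ} (hC : 0 < C) {α : ℝ} (hα : Irrational α) {q : ℕ → ℕ}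
    (hq : ∀ n, (q n : ℝ) = (GenContFract.of α).dens n) :
    Summable fun k => logCoeff C q k * q k := by
  refine .of_nonneg_of_le (fun k => mul_nonneg (logCoeff_nonneg hC q k) (Nat.cast_nonneg _))
    (fun k => ?_) ((Real.summable_one_div_nat_pow.2 one_lt_two).mul_left
      (16 / (C * Real.log 2 ^ 2)))
  have hlog2 : 0 < Real.log 2 := Real.log_pos one_lt_two
  rw [logCoeff]
  split_ifs with hk
  · have hk' : (2 : ℝ) ≤ k := by exact_mod_cast hk
    have hqk : (0 : ℝ) < q k := by rw [hq]; linarith [GenContFract.one_le_dens α k]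
    have h := Real.log_le_log (by positivity) (GenContFract.two_pow_le_two_mul_dens_sq hα k)
    rw [← hq, Real.log_pow, Real.log_mul two_ne_zero (by positivity), Real.log_pow] at h
    push_cast at h
    have hlog : k * Real.log 2 / 4 ≤ Real.log (q k) := by nlinarith
    calc 1 / (C * (q k * Real.log (q k) ^ 2)) * q k = 1 / (C * Real.log (q k) ^ 2) := by
          field_simp
      _ ≤ 1 / (C * (k * Real.log 2 / 4) ^ 2) := by gcongr
      _ = _ := by field_simp; norm_num
  · rw [zero_mul]; positivity

/-- counterexample to polynomial rigidity in `C¹`: with `α` irrational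
with convergent denominators `q_k`, and
`φ(x) = (1/C)∑_{k≥2} (e(q_k x) + e(−q_k x))/(q_k (log q_k)²) =
(1/C)∑_{k≥2} 2cos(2πq_k x)/(q_k (log q_k)²)` where `C > 0` is chosen so that
`Var(φ) < 1/2`, the function `φ` is `C¹` with mean zero, and there is `c > 0` such that
for all large `n` and every `T_{α,φ}`-invariant Borel probability measure `ν`,
`∫ d(T^{q_n}(x,y),(x,y))² dν ≥ c/(log q_n)⁴`. -/
theorem counterexample_C1
    (α : ℝ) (hα : Irrational α)
    (q : ℕ → ℕ) (hq : ∀ n, (q n : ℝ) = (GenContFract.of α).dens n)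
    (C : ℝ) (hC : 0 < C)
    (φ : ℝ → ℝ)
    (hφ : φ = fun x => (1 / C) * ∑' k : ℕ,
      if 2 ≤ k then
        2 * Real.cos (2 * Real.pi * (q k : ℝ) * x) / ((q k : ℝ) * Real.log (q k : ℝ) ^ 2)
      else 0)
    (hVar : eVariationOn φ (Set.Icc 0 1) < ENNReal.ofReal (1/2))
    (T : AddCircle (1:ℝ) × AddCircle (1:ℝ) → AddCircle (1:ℝ) × AddCircle (1:ℝ))
    (hT : T = fun p => (p.1 + (α : AddCircle (1:ℝ)),
      p.2 + ((AddCircle.liftIco 1 0 φ p.1 : ℝ) : AddCircle (1:ℝ)))) :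
    ContDiff ℝ 1 φ ∧ (∫ x in (0:ℝ)..1, φ x) = 0 ∧
    ∃ c : ℝ, 0 < c ∧ ∃ N : ℕ, ∀ n ≥ N,
      ∀ ν : Measure (AddCircle (1:ℝ) × AddCircle (1:ℝ)),
        IsProbabilityMeasure ν → Measure.map T ν = ν →
        c / Real.log (q n : ℝ) ^ 4 ≤ ∫ z, dist (T^[q n] z) z ^ 2 ∂ν := by
  have hpos (k : ℕ) : (0 : ℝ) < q k := by
    rw [hq]; linarith [GenContFract.one_le_dens α k]
  have hq1 (k : ℕ) : (1 : ℝ) ≤ q k := by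
    rw [hq]; exact GenContFract.one_le_dens α k
  have hmono := strictMonoOn_dens hα hq
  have ha0 := logCoeff_nonneg hC q
  have haq := summable_logCoeff_mul hC hα hq
  have ha : Summable (logCoeff C q) := .of_nonneg_of_le ha0
    (fun k => le_mul_of_one_le_right (ha0 k) (hq1 k)) haq
  have ha' : Summable fun k => |logCoeff C q k| := ha.abs
  replace hφ : φ = fun x => ∑' k, 2 * logCoeff C q k * Real.cos (2 * Real.pi * q k * x) := by
    ext x
    rw [hφ]
    dsimp only
    rw [← tsum_mul_left]
    refine tsum_congr fun k => ?_
    rw [logCoeff]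
    split_ifs
    · rw [mul_comm C, ← div_div, ← div_div]; ring
    · simp
  have hdiff : ContDiff ℝ 1 φ := hφ ▸
    contDiff_one_tsum_cos ha' (by simpa only [abs_of_nonneg (ha0 _)] using haq)
  have hmean : ∫ x in (0 : ℝ)..1, φ x = 0 := hφ ▸
    integral_tsum_cos_eq_zero ha' fun k _ => by exact_mod_cast (hpos k).ne'
  have hper : Function.Periodic φ 1 := hφ ▸ periodic_tsum_cos _ _
  refine ⟨hdiff, hmean, 1 / (16 * Real.pi ^ 2 * C ^ 2), by positivity, 2, fun n hn ν _ hν => ?_⟩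
  set F : AddCircle (1 : ℝ) → ℝ := AddCircle.liftIco 1 0 φ with hFdef
  have hFc : Continuous F := AddCircle.liftIco_zero_continuous
    (by simpa using (hper 0).symm) hdiff.continuous.continuousOn
  have hF (z : AddCircle (1 : ℝ)) : HasSum (fun k => (logCoeff C q k : ℂ) *
      (fourier (q k) z + fourier (-(q k : ℤ)) z)) (F z) := by
    induction z using QuotientAddGroup.induction_on with
    | H x =>
      rw [hFdef, hper.liftIco_coe, hφ]
      exact hasSum_fourier_tsum_cos ha' x
  have hTc : Continuous T := by
    rw [hT]
    exact (continuous_fst.add continuous_const).prodMk (continuous_snd.add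
      ((AddCircle.continuous_mk' 1).comp (hFc.comp continuous_fst)))
  have hrT (z : AddCircle (1 : ℝ) × AddCircle (1 : ℝ)) : (T z).1 = z.1 + α := by rw [hT]
  have hiter (N : ℕ) (z : AddCircle (1 : ℝ) × AddCircle (1 : ℝ)) :
      T^[N] z = (z.1 + N • (α : AddCircle (1 : ℝ)),
        z.2 + ((birkhoffSum T (F ∘ Prod.fst) N z : ℝ) : AddCircle (1 : ℝ))) := by
    rw [hT]
    exact iterate_skewProduct F (α : AddCircle (1 : ℝ))
      (QuotientAddGroup.mk' (AddSubgroup.zmultiples (1 : ℝ))) N z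
  -- By the Denjoy–Koksma inequality, the Birkhoff sums are their own distance to `ℤ`.
  have hsmall (z : AddCircle (1 : ℝ) × AddCircle (1 : ℝ)) :
      |birkhoffSum T (F ∘ Prod.fst) (q n) z| ≤ |(1 : ℝ)| / 2 := by
    obtain ⟨x, hx⟩ := QuotientAddGroup.mk_surjective z.1
    obtain ⟨p, hp, hpα⟩ := GenContFract.exists_isCoprime_abs_dens_mul_sub_le hα hq n
    have hle : |q n * α - p| ≤ 1 / q n := hpα.trans
      (one_div_le_one_div_of_le (hpos n) (by rw [hq, hq]; exact GenContFract.of_den_mono))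
    have h := hper.abs_sum_sub_integral_le_eVariationOn hdiff.continuous hVar.ne_top
      (by exact_mod_cast hpos n) hp hle x
    rw [hmean, mul_zero, sub_zero] at h
    have hS : birkhoffSum T (F ∘ Prod.fst) (q n) z =
        ∑ j ∈ Finset.range (q n), φ (x + j * α) := by
      refine Finset.sum_congr rfl fun j _ => ?_
      rw [Function.comp_apply, hiter, ← hper.liftIco_coe]
      dsimp only
      rw [← hx]
      congr 1
      push_cast [← nsmul_eq_mul]
      rfl
    rw [hS, abs_one]
    exact h.trans (ENNReal.toReal_le_of_le_ofReal (by norm_num) hVar.le)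
  have hdist (z : AddCircle (1 : ℝ) × AddCircle (1 : ℝ)) :
      birkhoffSum T (F ∘ Prod.fst) (q n) z ^ 2 ≤ dist (T^[q n] z) z ^ 2 := by
    rw [← sq_abs, ← (AddCircle.norm_coe_eq_abs_iff (p := 1) one_ne_zero).2 (hsmall z)]
    refine pow_le_pow_left₀ (norm_nonneg _) ?_ 2
    rw [hiter, Prod.dist_eq]
    refine le_max_of_le_right ?_
    simp [dist_eq_norm]
  have hSc : Continuous (birkhoffSum T (F ∘ Prod.fst) (q n)) :=
    continuous_finsetSum _ fun j _ => (hFc.comp continuous_fst).comp (hTc.iterate j)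
  have hdc : Continuous fun z => dist (T^[q n] z) z ^ 2 :=
    ((hTc.iterate _).dist continuous_id).pow 2
  obtain ⟨l, hl, p, hql, hp⟩ := exists_dens_le_two_mul_and_mul_abs_le hα hq n
  have hinj (k : ℕ) (hk : logCoeff C q k ≠ 0) (hkl : q k = q l) : k = l := by
    have hk2 : 2 ≤ k := by
      by_contra h
      exact hk (if_neg h)
    exact hmono.injOn (by simp; omega) (by simp; omega) hkl
  have hlower := sq_le_integral_birkhoffSum_sq (ν := ν) ⟨hTc.measurable, hν⟩ measurable_fst hrT
    hα ha ha0 hFc hF (by exact_mod_cast hpos l) hinj hp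
  refine le_trans ?_ (hlower.trans (integral_mono
    ((hSc.pow 2).integrable_of_hasCompactSupport (.of_compactSpace _))
    (hdc.integrable_of_hasCompactSupport (.of_compactSpace _)) hdist))
  have hqn2 : (2 : ℝ) ≤ q n := by
    have h1 := hmono (a := 1) (b := n) (by simp) (by simp; omega) (by omega)
    have h2 : 1 ≤ q 1 := by exact_mod_cast hq1 1
    exact_mod_cast (by omega : 2 ≤ q n)
  have hLl : 0 < Real.log (q l) := Real.log_pos (by
    have h1 := hmono.monotoneOn (a := n) (b := l) (by simp; omega) (by simp; omega) hl
    have h2 : (q n : ℝ) ≤ q l := by exact_mod_cast h1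
    linarith)
  have hLn : 0 < Real.log (q n) := Real.log_pos (by linarith)
  have hL : Real.log (q l) ≤ 2 * Real.log (q n) := by
    have h := Real.log_le_log (hpos l) hql
    rw [Real.log_mul two_ne_zero (hpos n).ne'] at h
    linarith [Real.log_le_log two_pos hqn2]
  have hn0 := hpos n
  have hl0 := hpos l
  calc 1 / (16 * Real.pi ^ 2 * C ^ 2) / Real.log (q n) ^ 4
      = (2 * q n / Real.pi * (1 / (C * (2 * q n * (2 * Real.log (q n)) ^ 2)))) ^ 2 := by
        field_simp
        norm_num
    _ ≤ (2 * q n / Real.pi * logCoeff C q l) ^ 2 := by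
        rw [logCoeff, if_pos (hn.trans hl)]
        gcongr
end
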